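/- Let G ⊆ F be a sub-σ-algebra. (1) If h¹ and h² are L-bounded normal integrands on ℝⁿ with G-conditional expectations ĥ¹ and ĥ², then h¹+h² is an L-bounded normal integrand and ĥ¹+ĥ² is a G-conditional expectation of h¹+h². (2) If α ∈ L¹(P) with α ≥ 0, h is a B(ℝⁿ)⊗G-measurable normal integrand, and the normal integrand (αh)(x,ω) := α(ω)h(x,ω) + δ_{cl dom h(·,ω)}(x) is L-bounded (where δ_C(x) = 0 if x ∈ C and +∞ otherwise, and dom h(·,ω) = {x : h(x,ω) < ∞}), then the integrand ((E^G α)h)(x,ω) := (E^G α)(ω)h(x,ω) + δ_{cl dom h(·,ω)}(x) is a G-conditional expectation of αh. -/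

import Mathlib

/-!
The difficulty in both assertions is that `h(x(·),·)` is only quasi-integrable, so that integrals
of its pieces may be infinite and cannot be subtracted freely. All arguments therefore use a form of
`ξ' = E^G ξ` without subtraction (`Balanced`):
`E[γ(ξ⁺ + ξ'⁻)] = E[γ(ξ'⁺ + ξ⁻)]` for every bounded nonnegative `G`-measurable `γ`.
If `ξ⁻` is integrable, it follows from `ξ' = E^G ξ` (`IsCondExpER.balanced`); if `ξ` is
quasi-integrable and `ξ'` is `G`-measurable, it implies `ξ' = E^G ξ` (`Balanced.isCondExpER`).
It may be checked on an increasing cover of `Ω` by sets of `G` (`Balanced.of_cover`), and it is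
additive when the negative parts are integrable (`Balanced.add`).

*Sums.* L-boundedness makes the negative parts of `h₁(x)` and `h₂(x)` integrable when `x` is bounded.
For general `x` the identity holds for `1_{‖x‖ ≤ k} x` for every `k`, hence for `x` on each set
`{‖x‖ ≤ k}`, hence everywhere. Quasi-integrability of the sum is only used in the last step, to
return to conditional expectations.

*Scalar multiples.* For `αh + δ` and `βh + δ` with `δ = δ_{cl dom h}` and `β` a version of `E^G α`,
the terms in `δ` are the same on both sides of the identity, and what remains is `E[αg] = E[βg]` for
`G`-measurable `g ≥ 0` (`balanced_mul`). The remaining point is the joint measurability of `βh + δ`.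
By the measurable projection theorem, `{ω | dom h(·,ω) ∩ U ≠ ∅}` agrees up to a null set with a set
of `G` for each `U` of a countable base, so `δ` is `B(E) ⊗ G`-measurable outside a null set `N` of
`G` (`exists_measurable_closure`). As `G` need not be complete, `β` is chosen equal to `1` on `N`,
where `βh + δ = h`.

The measurable projection theorem up to null sets is obtained from two facts: a set in
`B(E) ⊗ G` is the inverse image of a Borel set under `(x, ω) ↦ (x, φ ω)` with `φ` taking values in a
countable power of `Bool`, and an analytic subset of a Polish space is universally measurable, since
its outer measure is approximated from inside by images of compact boxes of `ℕ → ℕ`.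
-/

open MeasureTheory ENNReal
open scoped RealInnerProductSpace

noncomputable section

namespace PaperDP

variable {Ω : Type*}

/-- The positive part of an extended real number, as an element of `ℝ≥0∞`. -/
def ePos (x : EReal) : ℝ≥0∞ := if x = ⊤ then ⊤ else ENNReal.ofReal x.toReal

/-- The extended integral of an extended-real-valued function: it is `+∞` unless the
positive part of the integrand is integrable, in which case it is the difference of the
integrals of the positive and negative parts. -/
def EInt {mΩ : MeasurableSpace Ω} (μ : Measure Ω) (ξ : Ω → EReal) : EReal :=
  if (∫⁻ ω, ePos (ξ ω) ∂μ) = ⊤ then ⊤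
  else ((∫⁻ ω, ePos (ξ ω) ∂μ : ℝ≥0∞) : EReal) - ((∫⁻ ω, ePos (-(ξ ω)) ∂μ : ℝ≥0∞) : EReal)

/-- An extended-real-valued random variable is quasi-integrable if its positive part or
its negative part is integrable. -/
def QuasiIntegrable {mΩ : MeasurableSpace Ω} (μ : Measure Ω) (ξ : Ω → EReal) : Prop :=
  (∫⁻ ω, ePos (ξ ω) ∂μ) ≠ ⊤ ∨ (∫⁻ ω, ePos (-(ξ ω)) ∂μ) ≠ ⊤

/-- `ξ'` is a version of the `G`-conditional expectation of the extended-real random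
variable `ξ`: it is `G`-measurable and satisfies `E[α ξ'] = E[α ξ]` for every bounded
nonnegative `G`-measurable real `α`. -/
def IsCondExpER {mΩ : MeasurableSpace Ω} (μ : Measure Ω) (G : MeasurableSpace Ω)
    (ξ ξ' : Ω → EReal) : Prop :=
  Measurable[G] ξ' ∧
  ∀ α : Ω → ℝ, Measurable[G] α → (∀ ω, 0 ≤ α ω) → (∃ C, ∀ ω, α ω ≤ C) →
    EInt μ (fun ω => (α ω : EReal) * ξ' ω) = EInt μ (fun ω => (α ω : EReal) * ξ ω)

/-- A normal integrand with respect to the σ-algebra `m` on `Ω`: a jointly measurable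
function (with respect to `B(E) ⊗ m`) with values in `ℝ ∪ {+∞}` which is lower
semicontinuous in its first argument. -/
def IsNormalIntegrand {E : Type*} [TopologicalSpace E] [MeasurableSpace E]
    (m : MeasurableSpace Ω) (h : E → Ω → EReal) : Prop :=
  Measurable[MeasurableSpace.prod inferInstance m] (fun p : E × Ω => h p.1 p.2) ∧
  (∀ ω, LowerSemicontinuous fun x => h x ω) ∧ ∀ x ω, h x ω ≠ ⊥

/-- `h` is L-bounded: `h(x,ω) ≥ -ρ(ω)‖x‖ - m(ω)` for integrable nonnegative `ρ, m`. -/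
def LBounded {E : Type*} [NormedAddCommGroup E] {mΩ : MeasurableSpace Ω} (μ : Measure Ω)
    (h : E → Ω → EReal) : Prop :=
  ∃ ρ m : Ω → ℝ, Integrable ρ μ ∧ Integrable m μ ∧ (∀ ω, 0 ≤ ρ ω) ∧ (∀ ω, 0 ≤ m ω) ∧
    ∀ᵐ ω ∂μ, ∀ x : E, (↑(-(ρ ω * ‖x‖ + m ω)) : EReal) ≤ h x ω

/-- `hG` is a `G`-conditional expectation of the normal integrand `h`: it is a
`B(E) ⊗ G`-measurable normal integrand such that `hG(x(·),·)` is a version of the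
`G`-conditional expectation of `h(x(·),·)` for every `G`-measurable `x` for which
`h(x(·),·)` is quasi-integrable. -/
def IsCondNI {E : Type*} [TopologicalSpace E] [MeasurableSpace E] {mΩ : MeasurableSpace Ω}
    (μ : Measure Ω) (G : MeasurableSpace Ω) (h hG : E → Ω → EReal) : Prop :=
  IsNormalIntegrand G hG ∧
  ∀ x : Ω → E, Measurable[G] x → QuasiIntegrable μ (fun ω => h (x ω) ω) →
    IsCondExpER μ G (fun ω => h (x ω) ω) (fun ω => hG (x ω) ω)

/-- The recession function of `g`: `g^∞(y) = sup_{r>0} (g(z + r y) - g(z))/r`, where `z`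
is any point with `g(z) < ∞` (for a proper lsc convex function the value does not depend
on the choice of `z`; we take the infimum over all such `z`). -/
def recessionFn {E : Type*} [AddCommGroup E] [Module ℝ E] (g : E → EReal) (y : E) : EReal :=
  ⨅ z : {z : E // g z < ⊤}, ⨆ r : {r : ℝ // 0 < r},
    ((r.1⁻¹ : ℝ) : EReal) * (g (z.1 + r.1 • y) - g z.1)

/-- Convexity of an extended-real-valued function. -/
def ConvexEFn {E : Type*} [AddCommGroup E] [Module ℝ E] (g : E → EReal) : Prop :=
  ∀ x y : E, ∀ a b : ℝ, 0 ≤ a → 0 ≤ b → a + b = 1 →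
    g (a • x + b • y) ≤ (a : EReal) * g x + (b : EReal) * g y

/-- A convex integrand: `h(·,ω)` is convex for every `ω`. -/
def ConvexIntegrand {E : Type*} [AddCommGroup E] [Module ℝ E]
    (h : E → Ω → EReal) : Prop :=
  ∀ ω, ConvexEFn (fun x => h x ω)


open Classical in
/-- The indicator (in the `+∞` convention) of the closure of the domain of `h(·,ω)`. -/
def domClInd {Ω : Type*} {E : Type*} [TopologicalSpace E] (h : E → Ω → EReal)
    (x : E) (ω : Ω) : EReal :=
  if x ∈ closure {y : E | h y ω < ⊤} then 0 else ⊤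

/-! ### Analytic sets are universally measurable -/

/-- The sequences whose first `k` coordinates are bounded by those of `b`. -/
def boxUpTo (b : ℕ → ℕ) (k : ℕ) : Set (ℕ → ℕ) := {s | ∀ i < k, s i ≤ b i}

/-- An open neighbourhood of the compact box `{s | ∀ i, s i ≤ b i}` contains some `boxUpTo b k`:
truncating points of `boxUpTo b k \ W` to the box gives a sequence whose cluster points are limits
of the untruncated points as well. -/
lemma exists_boxUpTo_subset (b : ℕ → ℕ) (W : Set (ℕ → ℕ)) (hW : IsOpen W)
    (hb : {s : ℕ → ℕ | ∀ i, s i ≤ b i} ⊆ W) : ∃ k, boxUpTo b k ⊆ W := by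
  by_contra! hcon
  have h1 : ∀ k, ∃ s, s ∈ boxUpTo b k ∧ s ∉ W := fun k => Set.not_subset.1 (hcon k)
  choose s hs hsW using h1
  have hK : IsCompact {s : ℕ → ℕ | ∀ i, s i ≤ b i} := by
    have : {s : ℕ → ℕ | ∀ i, s i ≤ b i} = Set.pi Set.univ (fun i => Set.Iic (b i)) := by
      ext; simp [Pi.le_def]
    rw [this]
    exact isCompact_univ_pi fun i => (Set.finite_Iic (b i)).isCompact
  obtain ⟨t, ht, φ, hφ, hlim⟩ := hK.tendsto_subseq (x := fun k i => min (s k i) (b i))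
    (fun k i => min_le_right _ _)
  refine (hW.isClosed_compl.mem_of_tendsto (f := s ∘ φ) (b := Filter.atTop) (x := t) ?_
    (Filter.Eventually.of_forall fun k => hsW _)) (hb ht)
  rw [tendsto_pi_nhds] at hlim ⊢
  intro i
  refine (hlim i).congr' ?_
  filter_upwards [Filter.eventually_gt_atTop i] with k hk
  exact min_eq_left (hs (φ k) i (hk.trans_le (hφ.id_le k)))

/-- If `f '' boxUpTo b k` has outer measure more than `c`, then so has `f '' boxUpTo b' (k + 1)` for
some `b'` differing from `b` only at `k`: outer measures are continuous along increasing unions of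
arbitrary sets. -/
lemma exists_update_boxUpTo {X : Type*} [MeasurableSpace X] (ν : Measure X)
    (f : (ℕ → ℕ) → X) (c : ℝ≥0∞) (b : ℕ → ℕ) (k : ℕ) (hc : c < ν (f '' boxUpTo b k)) :
    ∃ m, c < ν (f '' boxUpTo (Function.update b k m) (k + 1)) := by
  have hU : f '' boxUpTo b k = ⋃ m, f '' boxUpTo (Function.update b k m) (k + 1) := by
    rw [← Set.image_iUnion]
    congr 1
    ext s
    simp only [boxUpTo, Set.mem_ofPred_eq, Set.mem_iUnion]
    constructor
    · intro hs
      refine ⟨s k, fun i hi => ?_⟩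
      rcases eq_or_ne i k with rfl | hik
      · simp
      · rw [Function.update_of_ne hik]; exact hs i (by omega)
    · rintro ⟨m, hm⟩ i hi
      have := hm i (by omega)
      rwa [Function.update_of_ne (by omega)] at this
  have hmono : Monotone fun m => f '' boxUpTo (Function.update b k m) (k + 1) := by
    intro m m' hmm
    refine Set.image_mono fun s hs i hi => ?_
    have := hs i hi
    rcases eq_or_ne i k with rfl | hik
    · simp only [Function.update_self] at this ⊢; omega
    · rw [Function.update_of_ne hik] at this ⊢; exact this
  rw [hU, hmono.measure_iUnion] at hc
  exact lt_iSup_iff.1 hc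

/-- Inner regularity of an analytic set for the outer measure of a finite Borel measure: the
compact sets are images of boxes `∏ i, {0, …, b i}`, with `b i` chosen recursively. -/
lemma exists_isCompact_of_range {X : Type*} [TopologicalSpace X] [PolishSpace X]
    [MeasurableSpace X] [BorelSpace X] (ν : Measure X) [IsFiniteMeasure ν]
    (f : (ℕ → ℕ) → X) (hf : Continuous f) (c : ℝ≥0∞) (hc : c < ν (Set.range f)) :
    ∃ K, MeasurableSet K ∧ K ⊆ Set.range f ∧ c ≤ ν K := by
  classical
  choose! g hg using exists_update_boxUpTo ν f c
  let B : ℕ → ℕ → ℕ := fun k => Nat.rec (fun _ => 0) (fun k b => Function.update b k (g b k)) k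
  have hB : ∀ k, B (k + 1) = Function.update (B k) k (g (B k) k) := fun k => rfl
  have hBc : ∀ k, c < ν (f '' boxUpTo (B k) k) := by
    intro k
    induction k with
    | zero =>
      have : boxUpTo (B 0) 0 = Set.univ := by ext; simp [boxUpTo]
      rwa [this, Set.image_univ]
    | succ k ih => rw [hB]; exact hg _ _ ih
  let b : ℕ → ℕ := fun i => B (i + 1) i
  have hBb : ∀ k i, i < k → B k i = b i := by
    intro k
    induction k with
    | zero => intro i hi; omega
    | succ k ih =>
      intro i hi
      rcases eq_or_ne i k with rfl | hik
      · rfl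
      · rw [hB, Function.update_of_ne hik]; exact ih i (by omega)
  have hbox : ∀ k, boxUpTo (B k) k = boxUpTo b k := by
    intro k
    ext s
    refine forall_congr' fun i => forall_congr' fun hi => ?_
    rw [hBb k i hi]
  have hK : IsCompact {s : ℕ → ℕ | ∀ i, s i ≤ b i} := by
    have : {s : ℕ → ℕ | ∀ i, s i ≤ b i} = Set.pi Set.univ (fun i => Set.Iic (b i)) := by
      ext; simp [Pi.le_def]
    rw [this]
    exact isCompact_univ_pi fun i => (Set.finite_Iic (b i)).isCompact
  refine ⟨f '' {s | ∀ i, s i ≤ b i}, (hK.image hf).measurableSet, Set.image_subset_range _ _, ?_⟩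
  rw [Set.measure_eq_iInf_isOpen]
  refine le_iInf fun V => le_iInf fun hV => le_iInf fun hVo => ?_
  obtain ⟨k, hk⟩ := exists_boxUpTo_subset b (f ⁻¹' V) (hVo.preimage hf) (Set.image_subset_iff.1 hV)
  have := hBc k
  rw [hbox] at this
  exact this.le.trans (measure_mono (Set.image_subset_iff.2 hk))

/-- Analytic sets are universally measurable. -/
lemma AnalyticSet.nullMeasurableSet' {X : Type*} [TopologicalSpace X] [PolishSpace X]
    [MeasurableSpace X] [BorelSpace X] (ν : Measure X) [IsFiniteMeasure ν]
    {A : Set X} (hA : AnalyticSet A) : NullMeasurableSet A ν := by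
  rw [AnalyticSet] at hA
  rcases hA with rfl | ⟨f, hf, rfl⟩
  · exact MeasurableSet.empty.nullMeasurableSet
  rcases eq_or_ne (ν (Set.range f)) 0 with h0 | h0
  · exact NullMeasurableSet.of_null h0
  obtain ⟨u, -, hu, hlim⟩ := exists_seq_strictMono_tendsto' (pos_iff_ne_zero.2 h0)
  choose K hKm hKs hKc using fun n => exists_isCompact_of_range ν f hf (u n) (hu n).2
  have hsub : (⋃ n, K n) ⊆ Set.range f := Set.iUnion_subset hKs
  have hle : ν (Set.range f) ≤ ν (⋃ n, K n) :=
    le_of_tendsto' hlim fun n => (hKc n).trans (measure_mono (Set.subset_iUnion K n))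
  have hm : MeasurableSet (⋃ n, K n) := MeasurableSet.iUnion hKm
  -- Both `⋃ n, K n` and the measurable hull of `range f` have the measure of `range f`.
  have hae : (⋃ n, K n) =ᵐ[ν] toMeasurable ν (Set.range f) :=
    ae_eq_of_subset_of_measure_ge (hsub.trans (subset_toMeasurable _ _))
      (by rw [measure_toMeasurable]; exact hle) hm.nullMeasurableSet (measure_ne_top _ _)
  refine hm.nullMeasurableSet.congr ?_
  refine Filter.EventuallyLE.antisymm hsub.eventuallyLE ?_
  exact (subset_toMeasurable ν (Set.range f)).eventuallyLE.trans hae.symm.le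

/-! ### Measurable projection -/

/-- A set in `B(E) ⊗ m` depends on countably many sets of `m` only, so it is the inverse image of a
measurable set in the product of `E` with a countable power of `Bool`. -/
lemma exists_preimage_of_measurableSet_prod {E Ω : Type*} [MeasurableSpace E]
    (m : MeasurableSpace Ω) (S : Set (E × Ω)) (hS : MeasurableSet S) :
    ∃ (ι : Type) (_ : Countable ι) (φ : Ω → ι → Bool) (T : Set (E × (ι → Bool))),
      Measurable φ ∧ MeasurableSet T ∧ S = (fun p : E × Ω => (p.1, φ p.2)) ⁻¹' T := by
  classical
  rw [← generateFrom_prod] at hS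
  induction S, hS using MeasurableSpace.generateFrom_induction with
  | hC t ht _ =>
    obtain ⟨A, hA, B, hB, rfl⟩ := ht
    refine ⟨Unit, inferInstance, fun ω _ => decide (ω ∈ B), A ×ˢ {v | v () = true}, ?_, ?_, ?_⟩
    · refine measurable_pi_lambda _ fun _ => ?_
      exact measurable_to_bool (by simpa [Set.preimage] using hB)
    · refine MeasurableSet.prod hA ?_
      exact (measurable_pi_apply (X := fun _ : Unit => Bool) ()) (measurableSet_singleton true)
    · ext p; simp
  | empty =>
    exact ⟨Unit, inferInstance, fun _ _ => true, ∅, measurable_const, MeasurableSet.empty, by simp⟩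
  | compl t _ ih =>
    obtain ⟨ι, hι, φ, T, hφ, hT, rfl⟩ := ih
    exact ⟨ι, hι, φ, Tᶜ, hφ, hT.compl, rfl⟩
  | iUnion s _ ih =>
    choose ι hι φ T hφ hT hs using ih
    refine ⟨Σ n, ι n, inferInstance, fun ω i => φ i.1 ω i.2,
      ⋃ n, (fun p : E × ((Σ n, ι n) → Bool) => (p.1, fun i => p.2 ⟨n, i⟩)) ⁻¹' T n, ?_, ?_, ?_⟩
    · exact measurable_pi_lambda _ fun i => (measurable_pi_apply i.2).comp (hφ i.1)
    · refine MeasurableSet.iUnion fun n => ?_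
      refine Measurable.prodMk measurable_fst (measurable_pi_lambda _ fun i => ?_) (hT n)
      exact (measurable_pi_apply _).comp measurable_snd
    · rw [Set.preimage_iUnion]
      exact Set.iUnion_congr fun n => by rw [hs n]; rfl

/-- Measurable projection theorem, up to null sets. -/
lemma nullMeasurableSet_proj {E Ω : Type*} [TopologicalSpace E] [PolishSpace E]
    [MeasurableSpace E] [BorelSpace E] (m : MeasurableSpace Ω) (ν : Measure Ω) [IsFiniteMeasure ν]
    (S : Set (E × Ω)) (hS : MeasurableSet S) : NullMeasurableSet (Prod.snd '' S) ν := by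
  obtain ⟨ι, hι, φ, T, hφ, hT, rfl⟩ := exists_preimage_of_measurableSet_prod m S hS
  have : PolishSpace Bool := inferInstance
  have : PolishSpace (ι → Bool) := inferInstance
  have hA : AnalyticSet (Prod.snd '' T) :=
    hT.analyticSet.image_of_continuous continuous_snd
  have : Prod.snd '' ((fun p : E × Ω => (p.1, φ p.2)) ⁻¹' T) = φ ⁻¹' (Prod.snd '' T) := by
    ext ω
    simp
  rw [this]
  exact (AnalyticSet.nullMeasurableSet' (ν.map φ) hA).preimage (hφ.quasiMeasurePreserving ν)

/-- Up to a null set of `Ω`, the fibrewise closure of a set in `B(E) ⊗ m` is again in `B(E) ⊗ m`. -/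
lemma exists_measurable_closure {E Ω : Type*} [TopologicalSpace E] [PolishSpace E]
    [MeasurableSpace E] [BorelSpace E] (m : MeasurableSpace Ω) (ν : Measure Ω) [IsFiniteMeasure ν]
    (S : Set (E × Ω)) (hS : MeasurableSet S) :
    ∃ N : Set Ω, MeasurableSet N ∧ ν N = 0 ∧ ∃ D : Set (E × Ω), MeasurableSet D ∧
      ∀ x, ∀ ω ∉ N, ((x, ω) ∈ D ↔ x ∈ closure {y | (y, ω) ∈ S}) := by
  let B := TopologicalSpace.countableBasis E
  have hBc : B.Countable := TopologicalSpace.countable_countableBasis E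
  have hBb : TopologicalSpace.IsTopologicalBasis B := TopologicalSpace.isBasis_countableBasis E
  have hP : ∀ U, ∃ Q : Set Ω, MeasurableSet Q ∧
      (U ∈ B → (Prod.snd '' (S ∩ U ×ˢ Set.univ) : Set Ω) =ᵐ[ν] Q) := by
    intro U
    by_cases hU : U ∈ B
    · obtain ⟨Q, hQ, hPQ⟩ := nullMeasurableSet_proj m ν (S ∩ U ×ˢ Set.univ)
        (hS.inter ((hBb.isOpen hU).measurableSet.prod MeasurableSet.univ))
      exact ⟨Q, hQ, fun _ => hPQ⟩
    · exact ⟨∅, MeasurableSet.empty, fun h => absurd h hU⟩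
  choose Q hQ hPQ using hP
  have hae : ∀ᵐ ω ∂ν, ∀ U ∈ B, (ω ∈ (Prod.snd '' (S ∩ U ×ˢ Set.univ) : Set Ω) ↔ ω ∈ Q U) :=
    (ae_ball_iff hBc).2 fun U hU => (hPQ U hU).mem_iff
  obtain ⟨N, hNsub, hNm, hN0⟩ := exists_measurable_superset_of_null (ae_iff.1 hae)
  refine ⟨N, hNm, hN0, ⋂ U ∈ B, (Uᶜ ×ˢ Set.univ ∪ Set.univ ×ˢ Q U), ?_, ?_⟩
  · exact MeasurableSet.biInter hBc fun U hU =>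
      ((hBb.isOpen hU).measurableSet.compl.prod MeasurableSet.univ).union
        (MeasurableSet.univ.prod (hQ U))
  · intro x ω hω
    have hω' : ∀ U ∈ B, (ω ∈ (Prod.snd '' (S ∩ U ×ˢ Set.univ) : Set Ω) ↔ ω ∈ Q U) := by
      by_contra hc
      exact hω (hNsub hc)
    rw [hBb.mem_closure_iff]
    simp only [Set.mem_iInter]
    refine forall_congr' fun U => forall_congr' fun hU => ?_
    have := hω' U hU
    simp only [Set.mem_union, Set.mem_prod, Set.mem_compl_iff, Set.mem_univ, and_true, true_and,
      ← this]
    rw [← imp_iff_not_or]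
    refine imp_congr_right fun _ => ?_
    constructor
    · rintro ⟨⟨y, ω'⟩, ⟨h1, h2⟩, rfl⟩
      exact ⟨y, h2.1, h1⟩
    · rintro ⟨y, h1, h2⟩
      exact ⟨(y, ω), ⟨h2, h1, trivial⟩, rfl⟩

/-! ### Positive and negative parts -/

lemma ePos_eq (x : EReal) : ePos x = x.toENNReal := rfl

lemma measurable_ePos : Measurable ePos := measurable_ereal_toENNReal

lemma measurable_ePos_neg : Measurable fun x : EReal => ePos (-x) :=
  measurable_ePos.comp continuous_neg.measurable

lemma ePos_mul {c : ℝ} (hc : 0 ≤ c) (x : EReal) :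
    ePos ((c : EReal) * x) = ENNReal.ofReal c * ePos x := by
  rw [ePos_eq, EReal.toENNReal_mul (by exact_mod_cast hc)]; rfl

lemma ePos_neg_mul {c : ℝ} (hc : 0 ≤ c) (x : EReal) :
    ePos (-((c : EReal) * x)) = ENNReal.ofReal c * ePos (-x) := by
  rw [← mul_neg, ePos_mul hc]

lemma ePos_add_eq {x y : EReal} (hx : x ≠ ⊥) (hy : y ≠ ⊥) :
    ePos (x + y) + (ePos (-x) + ePos (-y)) = ePos (-(x + y)) + (ePos x + ePos y) := by
  induction x with
  | bot => exact absurd rfl hx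
  | top => rw [EReal.top_add_of_ne_bot hy]; simp [ePos_eq]
  | coe a =>
    induction y with
    | bot => exact absurd rfl hy
    | top => rw [EReal.add_top_of_ne_bot hx]; simp [ePos_eq]
    | coe b =>
      rw [← EReal.coe_add, ← EReal.coe_neg, ← EReal.coe_neg, ← EReal.coe_neg]
      simp only [ePos_eq, EReal.real_coe_toENNReal]
      rw [← ENNReal.toReal_eq_toReal_iff' (by simp) (by simp)]
      simp only [ne_eq, ENNReal.ofReal_ne_top, not_false_eq_true, ENNReal.add_eq_top, or_self,
        ENNReal.toReal_add, ENNReal.toReal_ofReal']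
      rcases max_cases (a + b) 0 with h1 | h1 <;> rcases max_cases (-(a + b)) 0 with h2 | h2 <;>
      rcases max_cases a 0 with h3 | h3 <;> rcases max_cases (-a) 0 with h4 | h4 <;>
      rcases max_cases b 0 with h5 | h5 <;> rcases max_cases (-b) 0 with h6 | h6 <;>
      linarith

lemma ePos_neg_add_le {x y : EReal} (hx : x ≠ ⊥) (hy : y ≠ ⊥) :
    ePos (-(x + y)) ≤ ePos (-x) + ePos (-y) := by
  rw [EReal.neg_add (Or.inl hx) (Or.inr hy), sub_eq_add_neg]
  exact EReal.toENNReal_add_le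

lemma ePos_of_nonpos {x : EReal} (hx : x ≤ 0) : ePos x = 0 := EReal.toENNReal_of_nonpos hx

lemma ePos_neg_of_nonneg {x : EReal} (hx : 0 ≤ x) : ePos (-x) = 0 :=
  ePos_of_nonpos (by simpa using EReal.neg_le_neg_iff.2 hx)

/-- The extended difference used by `EInt`. -/
def eDiff (a b : ℝ≥0∞) : EReal := if a = ⊤ then ⊤ else (a : EReal) - (b : EReal)

/-- With finite subtrahends, equality of differences can be written without subtraction. -/
lemma eDiff_eq_iff {a b a' b' : ℝ≥0∞} (hb : b ≠ ⊤) (hb' : b' ≠ ⊤) :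
    eDiff a b = eDiff a' b' ↔ a + b' = a' + b := by
  lift b to NNReal using hb
  lift b' to NNReal using hb'
  unfold eDiff
  induction a with
  | top =>
    induction a' with
    | top => simp
    | coe a' =>
      simp only [if_true, ENNReal.coe_ne_top, if_false, top_add]
      rw [← ENNReal.coe_add]
      refine iff_of_false ?_ ENNReal.coe_ne_top.symm
      exact (EReal.coe_ne_top ((a' : ℝ) - b')).symm
  | coe a =>
    induction a' with
    | top =>
      simp only [if_true, ENNReal.coe_ne_top, if_false, top_add]
      rw [← ENNReal.coe_add]
      refine iff_of_false ?_ ENNReal.coe_ne_top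
      exact (EReal.coe_ne_top ((a : ℝ) - b))
    | coe a' =>
      simp only [ENNReal.coe_ne_top, if_false]
      have : ((a : ℝ) - b = a' - b') ↔ (a : ℝ≥0∞) + b' = a' + b := by
        rw [← ENNReal.coe_add, ← ENNReal.coe_add, ENNReal.coe_inj, ← NNReal.coe_inj]
        push_cast
        constructor <;> intro h <;> linarith
      rw [← this]
      exact EReal.coe_eq_coe_iff (x := (a : ℝ) - b) (y := (a' : ℝ) - b')

lemma eDiff_eq_of_ne_top {a b a' b' : ℝ≥0∞} (ha : a ≠ ⊤) (ha' : a' ≠ ⊤)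
    (h : a + b' = a' + b) : eDiff a b = eDiff a' b' := by
  by_cases hb : b = ⊤
  · subst hb
    have : b' = ⊤ := by
      rw [add_top, ENNReal.add_eq_top] at h
      exact h.resolve_left ha
    subst this
    unfold eDiff
    lift a to NNReal using ha
    lift a' to NNReal using ha'
    simp only [ENNReal.coe_ne_top, if_false]
    rw [EReal.coe_ennreal_top, EReal.sub_top, EReal.sub_top]
  · have hb' : b' ≠ ⊤ := by
      intro hb'
      subst hb'
      rw [add_top] at h
      exact ENNReal.add_ne_top.2 ⟨ha', hb⟩ h.symm
    exact (eDiff_eq_iff hb hb').2 h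

lemma EInt_mul {Ω : Type*} {mΩ : MeasurableSpace Ω} (μ : Measure Ω) {γ : Ω → ℝ}
    (hγ : ∀ ω, 0 ≤ γ ω) (ξ : Ω → EReal) :
    EInt μ (fun ω => (γ ω : EReal) * ξ ω) =
      eDiff (∫⁻ ω, ENNReal.ofReal (γ ω) * ePos (ξ ω) ∂μ)
        (∫⁻ ω, ENNReal.ofReal (γ ω) * ePos (-(ξ ω)) ∂μ) := by
  simp only [EInt, eDiff, ePos_mul (hγ _), ePos_neg_mul (hγ _)]

/-! ### Conditional expectations without subtraction -/

/-- The identity `E[γ(ξ⁺ + ξ'⁻)] = E[γ(ξ'⁺ + ξ⁻)]` for all bounded nonnegative `G`-measurable `γ`.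
For quasi-integrable `ξ` it expresses that `ξ'` is the `G`-conditional expectation of `ξ`, but it
involves no differences, so it is additive and countably additive without integrability. -/
def Balanced {Ω : Type*} {mΩ : MeasurableSpace Ω} (μ : Measure Ω) (G : MeasurableSpace Ω)
    (ξ ξ' : Ω → EReal) : Prop :=
  ∀ γ : Ω → ℝ, Measurable[G] γ → (∀ ω, 0 ≤ γ ω) → (∃ C, ∀ ω, γ ω ≤ C) →
    ∫⁻ ω, ENNReal.ofReal (γ ω) * (ePos (ξ ω) + ePos (-(ξ' ω))) ∂μ =
      ∫⁻ ω, ENNReal.ofReal (γ ω) * (ePos (ξ' ω) + ePos (-(ξ ω))) ∂μ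

section

variable {Ω : Type*} {G mΩ : MeasurableSpace Ω} {μ : Measure Ω}

lemma Balanced.neg {ξ ξ' : Ω → EReal} (h : Balanced μ G ξ ξ') :
    Balanced μ G (fun ω => -(ξ ω)) (fun ω => -(ξ' ω)) := by
  intro γ hγ hγ0 hγC
  have := h γ hγ hγ0 hγC
  simp only [neg_neg]
  rw [show (fun ω => ENNReal.ofReal (γ ω) * (ePos (-(ξ ω)) + ePos (ξ' ω))) =
    fun ω => ENNReal.ofReal (γ ω) * (ePos (ξ' ω) + ePos (-(ξ ω))) from
      funext fun ω => by rw [add_comm], ← this]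
  exact lintegral_congr fun ω => by rw [add_comm]

/-- Testing with `γ` on `{ξ' ≤ 0}` shows that passing to `ξ'` decreases the negative part. -/
lemma Balanced.lintegral_neg_le {ξ ξ' : Ω → EReal} (h : Balanced μ G ξ ξ')
    (hξ' : Measurable[G] ξ') {γ : Ω → ℝ} (hγ : Measurable[G] γ) (hγ0 : ∀ ω, 0 ≤ γ ω)
    (hγC : ∃ C, ∀ ω, γ ω ≤ C) :
    ∫⁻ ω, ENNReal.ofReal (γ ω) * ePos (-(ξ' ω)) ∂μ ≤
      ∫⁻ ω, ENNReal.ofReal (γ ω) * ePos (-(ξ ω)) ∂μ := by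
  classical
  obtain ⟨C, hC⟩ := hγC
  have hN : MeasurableSet[G] {ω | ξ' ω ≤ 0} := hξ' measurableSet_Iic
  have key := h ({ω | ξ' ω ≤ 0}.indicator γ) (hγ.indicator hN)
    (fun ω => Set.indicator_nonneg (fun _ _ => hγ0 _) _)
    ⟨C, fun ω => (Set.indicator_le_self' (fun _ _ => hγ0 _) ω).trans (hC ω)⟩
  calc _ ≤ ∫⁻ ω, ENNReal.ofReal ({ω | ξ' ω ≤ 0}.indicator γ ω) *
              (ePos (ξ ω) + ePos (-(ξ' ω))) ∂μ := by
        refine lintegral_mono fun ω => ?_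
        by_cases hω : ξ' ω ≤ 0
        · rw [Set.indicator_of_mem (by exact hω)]
          gcongr
          exact le_add_self
        · simp [ePos_neg_of_nonneg (not_le.1 hω).le]
    _ = _ := key
    _ ≤ _ := by
        refine lintegral_mono fun ω => ?_
        by_cases hω : ξ' ω ≤ 0
        · rw [Set.indicator_of_mem (by exact hω), ePos_of_nonpos hω, zero_add]
        · rw [Set.indicator_of_notMem (by exact hω)]; simp

lemma lintegral_ofReal_mul_ne_top {γ : Ω → ℝ} (hγC : ∃ C, ∀ ω, γ ω ≤ C) {f : Ω → ℝ≥0∞}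
    (hf : ∫⁻ ω, f ω ∂μ ≠ ⊤) : ∫⁻ ω, ENNReal.ofReal (γ ω) * f ω ∂μ ≠ ⊤ := by
  obtain ⟨C, hC⟩ := hγC
  refine ne_top_of_le_ne_top (b := ENNReal.ofReal C * ∫⁻ ω, f ω ∂μ)
    (ENNReal.mul_ne_top ENNReal.ofReal_ne_top hf) ?_
  rw [← lintegral_const_mul' _ _ ENNReal.ofReal_ne_top]
  refine lintegral_mono fun ω => ?_
  have := ENNReal.ofReal_le_ofReal (hC ω)
  gcongr

/-- The balance identity split into four integrals. -/
lemma lintegral_balance_iff (hG : G ≤ mΩ) {ξ ξ' : Ω → EReal} (hξ' : Measurable[G] ξ')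
    {γ : Ω → ℝ} (hγ : Measurable[G] γ) :
    (∫⁻ ω, ENNReal.ofReal (γ ω) * (ePos (ξ ω) + ePos (-(ξ' ω))) ∂μ =
      ∫⁻ ω, ENNReal.ofReal (γ ω) * (ePos (ξ' ω) + ePos (-(ξ ω))) ∂μ) ↔
    (∫⁻ ω, ENNReal.ofReal (γ ω) * ePos (ξ ω) ∂μ +
        ∫⁻ ω, ENNReal.ofReal (γ ω) * ePos (-(ξ' ω)) ∂μ =
      ∫⁻ ω, ENNReal.ofReal (γ ω) * ePos (ξ' ω) ∂μ +
        ∫⁻ ω, ENNReal.ofReal (γ ω) * ePos (-(ξ ω)) ∂μ) := by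
  have hγm : Measurable fun ω => ENNReal.ofReal (γ ω) := (hγ.mono hG le_rfl).ennreal_ofReal
  have hp : Measurable fun ω => ePos (ξ' ω) := measurable_ePos.comp (hξ'.mono hG le_rfl)
  have hn : Measurable fun ω => ePos (-(ξ' ω)) := measurable_ePos_neg.comp (hξ'.mono hG le_rfl)
  have hγp : Measurable fun ω => ENNReal.ofReal (γ ω) * ePos (ξ' ω) := hγm.mul hp
  have hγn : Measurable fun ω => ENNReal.ofReal (γ ω) * ePos (-(ξ' ω)) := hγm.mul hn
  simp only [mul_add]
  rw [lintegral_add_right _ hγn, lintegral_add_left hγp]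

/-- For quasi-integrable `ξ` one of the pairs of positive or negative parts is integrable, so the
balance identity can be rearranged into equality of extended integrals. -/
lemma Balanced.isCondExpER (hG : G ≤ mΩ) {ξ ξ' : Ω → EReal} (h : Balanced μ G ξ ξ')
    (hξ' : Measurable[G] ξ') (hq : QuasiIntegrable μ ξ) : IsCondExpER μ G ξ ξ' := by
  refine ⟨hξ', fun γ hγ hγ0 hγC => ?_⟩
  rw [EInt_mul μ hγ0, EInt_mul μ hγ0]
  have key := (lintegral_balance_iff hG hξ' hγ).1 (h γ hγ hγ0 hγC)
  rcases hq with hq | hq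
  · have h1 := lintegral_ofReal_mul_ne_top hγC hq
    have h2 := h.neg.lintegral_neg_le (continuous_neg.measurable.comp hξ') hγ hγ0 hγC
    simp only [neg_neg] at h2
    exact (eDiff_eq_of_ne_top h1 (ne_top_of_le_ne_top h1 h2) key).symm
  · have h1 := lintegral_ofReal_mul_ne_top hγC hq
    have h2 := h.lintegral_neg_le hξ' hγ hγ0 hγC
    exact ((eDiff_eq_iff h1 (ne_top_of_le_ne_top h1 h2)).2 key).symm

/-- The test function `1_{ξ' ≤ 0}` would give `E[γ ξ'] = -∞` if `ξ'⁻` were not integrable, while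
`E[γ ξ] > -∞`. -/
lemma IsCondExpER.lintegral_neg_ne_top {ξ ξ' : Ω → EReal} (h : IsCondExpER μ G ξ ξ')
    (hq : ∫⁻ ω, ePos (-(ξ ω)) ∂μ ≠ ⊤) : ∫⁻ ω, ePos (-(ξ' ω)) ∂μ ≠ ⊤ := by
  classical
  have hN : MeasurableSet[G] {ω | ξ' ω ≤ 0} := h.1 measurableSet_Iic
  set γ : Ω → ℝ := {ω | ξ' ω ≤ 0}.indicator 1 with hγdef
  have hγ0 : ∀ ω, 0 ≤ γ ω := fun ω => Set.indicator_nonneg (fun _ _ => zero_le_one) _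
  have hγC : ∃ C, ∀ ω, γ ω ≤ C := ⟨1, fun ω =>
    (Set.indicator_le_self' (fun _ _ => zero_le_one) ω)⟩
  have key := h.2 γ (measurable_const.indicator hN) hγ0 hγC
  rw [EInt_mul μ hγ0, EInt_mul μ hγ0] at key
  have hpos : ∫⁻ ω, ENNReal.ofReal (γ ω) * ePos (ξ' ω) ∂μ = 0 := by
    rw [← lintegral_zero (μ := μ)]
    refine lintegral_congr fun ω => ?_
    by_cases hω : ξ' ω ≤ 0
    · simp [ePos_of_nonpos hω]
    · rw [hγdef, Set.indicator_of_notMem (by exact hω)]; simp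
  have hneg : ∫⁻ ω, ENNReal.ofReal (γ ω) * ePos (-(ξ' ω)) ∂μ = ∫⁻ ω, ePos (-(ξ' ω)) ∂μ := by
    refine lintegral_congr fun ω => ?_
    by_cases hω : ξ' ω ≤ 0
    · rw [hγdef, Set.indicator_of_mem (by exact hω)]; simp
    · simp [ePos_neg_of_nonneg (not_le.1 hω).le]
  rw [hpos, hneg] at key
  intro htop
  rw [htop] at key
  have hb := lintegral_ofReal_mul_ne_top hγC hq
  have hbot : eDiff 0 ⊤ = ⊥ := by simp [eDiff]
  rw [hbot] at key
  revert key
  generalize ∫⁻ ω, ENNReal.ofReal (γ ω) * ePos (ξ ω) ∂μ = a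
  lift (∫⁻ ω, ENNReal.ofReal (γ ω) * ePos (-(ξ ω)) ∂μ) to NNReal using hb with b
  unfold eDiff
  induction a with
  | top => simp
  | coe a =>
    simp only [ENNReal.coe_ne_top, if_false]
    exact (EReal.coe_ne_bot ((a : ℝ) - b)).symm

lemma IsCondExpER.balanced (hG : G ≤ mΩ) {ξ ξ' : Ω → EReal} (h : IsCondExpER μ G ξ ξ')
    (hq : ∫⁻ ω, ePos (-(ξ ω)) ∂μ ≠ ⊤) : Balanced μ G ξ ξ' := by
  intro γ hγ hγ0 hγC
  have key := h.2 γ hγ hγ0 hγC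
  rw [EInt_mul μ hγ0, EInt_mul μ hγ0] at key
  exact (lintegral_balance_iff hG h.1 hγ).2 <| (eDiff_eq_iff (lintegral_ofReal_mul_ne_top hγC hq)
    (lintegral_ofReal_mul_ne_top hγC (h.lintegral_neg_ne_top hq))).1 key.symm

/-- Splitting `γ ((ξ₁+ξ₂)⁺ + ξ₁⁻ + ξ₂⁻) = γ ((ξ₁+ξ₂)⁻ + ξ₁⁺ + ξ₂⁺)` under the integral. -/
lemma lintegral_add_parts {γ : Ω → ℝ≥0∞} (hγ : Measurable γ) {ξ₁ ξ₂ : Ω → EReal}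
    (h₁ : Measurable ξ₁) (h₂ : Measurable ξ₂) (hb₁ : ∀ ω, ξ₁ ω ≠ ⊥) (hb₂ : ∀ ω, ξ₂ ω ≠ ⊥) :
    ∫⁻ ω, γ ω * ePos (ξ₁ ω + ξ₂ ω) ∂μ + (∫⁻ ω, γ ω * ePos (-(ξ₁ ω)) ∂μ +
      ∫⁻ ω, γ ω * ePos (-(ξ₂ ω)) ∂μ) =
    ∫⁻ ω, γ ω * ePos (-(ξ₁ ω + ξ₂ ω)) ∂μ + (∫⁻ ω, γ ω * ePos (ξ₁ ω) ∂μ +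
      ∫⁻ ω, γ ω * ePos (ξ₂ ω) ∂μ) := by
  have p₁ : Measurable fun ω => γ ω * ePos (ξ₁ ω) := hγ.mul (measurable_ePos.comp h₁)
  have p₂ : Measurable fun ω => γ ω * ePos (ξ₂ ω) := hγ.mul (measurable_ePos.comp h₂)
  have n₁ : Measurable fun ω => γ ω * ePos (-(ξ₁ ω)) := hγ.mul (measurable_ePos_neg.comp h₁)
  have n₂ : Measurable fun ω => γ ω * ePos (-(ξ₂ ω)) := hγ.mul (measurable_ePos_neg.comp h₂)
  have n : Measurable fun ω => γ ω * ePos (-(ξ₁ ω)) + γ ω * ePos (-(ξ₂ ω)) := n₁.add n₂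
  have p : Measurable fun ω => γ ω * ePos (ξ₁ ω) + γ ω * ePos (ξ₂ ω) := p₁.add p₂
  rw [← lintegral_add_left n₁, ← lintegral_add_left p₁, ← lintegral_add_right _ n,
    ← lintegral_add_right _ p]
  refine lintegral_congr fun ω => ?_
  simp only [← mul_add, ePos_add_eq (hb₁ ω) (hb₂ ω)]

lemma Balanced.add (hG : G ≤ mΩ) {ξ₁ ξ₁' ξ₂ ξ₂' : Ω → EReal}
    (h₁ : Balanced μ G ξ₁ ξ₁') (h₂ : Balanced μ G ξ₂ ξ₂')
    (m₁ : Measurable ξ₁) (m₂ : Measurable ξ₂) (m₁' : Measurable[G] ξ₁') (m₂' : Measurable[G] ξ₂')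
    (b₁ : ∀ ω, ξ₁ ω ≠ ⊥) (b₂ : ∀ ω, ξ₂ ω ≠ ⊥) (b₁' : ∀ ω, ξ₁' ω ≠ ⊥) (b₂' : ∀ ω, ξ₂' ω ≠ ⊥)
    (q₁ : ∫⁻ ω, ePos (-(ξ₁ ω)) ∂μ ≠ ⊤) (q₂ : ∫⁻ ω, ePos (-(ξ₂ ω)) ∂μ ≠ ⊤) :
    Balanced μ G (fun ω => ξ₁ ω + ξ₂ ω) (fun ω => ξ₁' ω + ξ₂' ω) := by
  intro γ hγ hγ0 hγC
  have hγm : Measurable fun ω => ENNReal.ofReal (γ ω) := (hγ.mono hG le_rfl).ennreal_ofReal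
  have e := lintegral_add_parts (μ := μ) hγm m₁ m₂ b₁ b₂
  have e' := lintegral_add_parts (μ := μ) hγm (m₁'.mono hG le_rfl) (m₂'.mono hG le_rfl) b₁' b₂'
  have k₁ := (lintegral_balance_iff hG m₁' hγ).1 (h₁ γ hγ hγ0 hγC)
  have k₂ := (lintegral_balance_iff hG m₂' hγ).1 (h₂ γ hγ hγ0 hγC)
  have f₁ := lintegral_ofReal_mul_ne_top hγC q₁
  have f₂ := lintegral_ofReal_mul_ne_top hγC q₂
  have f₁' := ne_top_of_le_ne_top f₁ (h₁.lintegral_neg_le m₁' hγ hγ0 hγC)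
  have f₂' := ne_top_of_le_ne_top f₂ (h₂.lintegral_neg_le m₂' hγ hγ0 hγC)
  refine (lintegral_balance_iff hG (m₁'.add m₂') hγ).2 ?_
  have hfin := ENNReal.add_ne_top.2 ⟨ENNReal.add_ne_top.2 ⟨f₁, f₂⟩, ENNReal.add_ne_top.2 ⟨f₁', f₂'⟩⟩
  refine (ENNReal.add_left_inj hfin).1 ?_
  -- The finite quantity `n₁ + n₂ + (n₁' + n₂')` of integrated negative parts of the summands has
  -- been added to both sides; it may be cancelled although the other terms can be infinite.
  revert e e' k₁ k₂
  generalize ∫⁻ ω, ENNReal.ofReal (γ ω) * ePos (ξ₁ ω + ξ₂ ω) ∂μ = s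
  generalize ∫⁻ ω, ENNReal.ofReal (γ ω) * ePos (-(ξ₁ ω + ξ₂ ω)) ∂μ = t
  generalize ∫⁻ ω, ENNReal.ofReal (γ ω) * ePos (ξ₁' ω + ξ₂' ω) ∂μ = s'
  generalize ∫⁻ ω, ENNReal.ofReal (γ ω) * ePos (-(ξ₁' ω + ξ₂' ω)) ∂μ = t'
  generalize ∫⁻ ω, ENNReal.ofReal (γ ω) * ePos (ξ₁ ω) ∂μ = p₁
  generalize ∫⁻ ω, ENNReal.ofReal (γ ω) * ePos (ξ₂ ω) ∂μ = p₂
  generalize ∫⁻ ω, ENNReal.ofReal (γ ω) * ePos (ξ₁' ω) ∂μ = p₁'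
  generalize ∫⁻ ω, ENNReal.ofReal (γ ω) * ePos (ξ₂' ω) ∂μ = p₂'
  generalize ∫⁻ ω, ENNReal.ofReal (γ ω) * ePos (-(ξ₁ ω)) ∂μ = n₁
  generalize ∫⁻ ω, ENNReal.ofReal (γ ω) * ePos (-(ξ₂ ω)) ∂μ = n₂
  generalize ∫⁻ ω, ENNReal.ofReal (γ ω) * ePos (-(ξ₁' ω)) ∂μ = n₁'
  generalize ∫⁻ ω, ENNReal.ofReal (γ ω) * ePos (-(ξ₂' ω)) ∂μ = n₂'
  intro e e' k₁ k₂
  calc s + t' + (n₁ + n₂ + (n₁' + n₂')) = (s + (n₁ + n₂)) + t' + (n₁' + n₂') := by ring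
    _ = t + t' + ((p₁ + n₁') + (p₂ + n₂')) := by rw [e]; ring
    _ = t + (t' + (p₁' + p₂')) + (n₁ + n₂) := by rw [k₁, k₂]; ring
    _ = s' + t + (n₁ + n₂ + (n₁' + n₂')) := by rw [← e']; ring

/-- The balance identity may be checked on the members of an increasing cover of `Ω` by sets of
`G`. -/
lemma Balanced.of_cover (hG : G ≤ mΩ) {ξ ξ' : Ω → EReal} {A : ℕ → Set Ω}
    (hA : ∀ k, MeasurableSet[G] (A k)) (hmono : Monotone A) (hU : ⋃ k, A k = Set.univ)
    {ζ ζ' : ℕ → Ω → EReal} (hζ : ∀ k, Balanced μ G (ζ k) (ζ' k))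
    (hξ : ∀ k, ∀ ω ∈ A k, ζ k ω = ξ ω) (hξ' : ∀ k, ∀ ω ∈ A k, ζ' k ω = ξ' ω) :
    Balanced μ G ξ ξ' := by
  classical
  intro γ hγ hγ0 hγC
  obtain ⟨C, hC⟩ := hγC
  have cover : ∀ f : Ω → ℝ≥0∞, ∫⁻ ω, f ω ∂μ = ⨆ k, ∫⁻ ω in A k, f ω ∂μ := fun f => by
    rw [← setLIntegral_iUnion_of_directed f hmono.directed_le, hU, setLIntegral_univ]
  rw [cover, cover (fun ω => ENNReal.ofReal (γ ω) * (ePos (ξ' ω) + ePos (-(ξ ω))))]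
  refine iSup_congr fun k => ?_
  have key := hζ k ((A k).indicator γ) (hγ.indicator (hA k))
    (fun ω => Set.indicator_nonneg (fun _ _ => hγ0 _) _)
    ⟨C, fun ω => (Set.indicator_le_self' (fun _ _ => hγ0 _) ω).trans (hC ω)⟩
  rw [← lintegral_indicator (hG _ (hA k)), ← lintegral_indicator (hG _ (hA k))]
  convert key using 1 <;> refine lintegral_congr fun ω => ?_
  all_goals
    by_cases hω : ω ∈ A k
    · simp [hω, hξ k ω hω, hξ' k ω hω]
    · simp [hω]

end

/-! ### Sums of normal integrands -/

section

variable {Ω : Type*} {E : Type*} [NormedAddCommGroup E] [MeasurableSpace E]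

lemma LowerSemicontinuous.ereal_add {X : Type*} [TopologicalSpace X] {f g : X → EReal}
    (hf : LowerSemicontinuous f) (hg : LowerSemicontinuous g) (bf : ∀ x, f x ≠ ⊥)
    (bg : ∀ x, g x ≠ ⊥) : LowerSemicontinuous fun x => f x + g x :=
  hf.add' hg fun x => EReal.continuousAt_add (Or.inr (bg x)) (Or.inl (bf x))

lemma add_ne_bot' {x y : EReal} (hx : x ≠ ⊥) (hy : y ≠ ⊥) : x + y ≠ ⊥ := by
  simp [EReal.add_eq_bot_iff, hx, hy]

lemma IsNormalIntegrand.add {m : MeasurableSpace Ω} {h₁ h₂ : E → Ω → EReal}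
    (H₁ : IsNormalIntegrand m h₁) (H₂ : IsNormalIntegrand m h₂) :
    IsNormalIntegrand m fun x ω => h₁ x ω + h₂ x ω :=
  ⟨H₁.1.add H₂.1, fun ω => LowerSemicontinuous.ereal_add (H₁.2.1 ω) (H₂.2.1 ω)
    (fun x => H₁.2.2 x ω) (fun x => H₂.2.2 x ω), fun x ω => add_ne_bot' (H₁.2.2 x ω) (H₂.2.2 x ω)⟩

lemma IsNormalIntegrand.measurable_comp {m : MeasurableSpace Ω} {h : E → Ω → EReal}
    (H : IsNormalIntegrand m h) {x : Ω → E} (hx : Measurable x) :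
    Measurable fun ω => h (x ω) ω :=
  H.1.comp (hx.prodMk measurable_id)

lemma LBounded.add {mΩ : MeasurableSpace Ω} {μ : Measure Ω} {h₁ h₂ : E → Ω → EReal}
    (H₁ : LBounded μ h₁) (H₂ : LBounded μ h₂) :
    LBounded μ fun x ω => h₁ x ω + h₂ x ω := by
  obtain ⟨ρ₁, m₁, hρ₁, hm₁, hρ₁0, hm₁0, hle₁⟩ := H₁
  obtain ⟨ρ₂, m₂, hρ₂, hm₂, hρ₂0, hm₂0, hle₂⟩ := H₂
  refine ⟨fun ω => ρ₁ ω + ρ₂ ω, fun ω => m₁ ω + m₂ ω, hρ₁.add hρ₂, hm₁.add hm₂,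
    fun ω => add_nonneg (hρ₁0 ω) (hρ₂0 ω), fun ω => add_nonneg (hm₁0 ω) (hm₂0 ω), ?_⟩
  filter_upwards [hle₁, hle₂] with ω h1 h2 x
  refine le_trans (le_of_eq ?_) (add_le_add (h1 x) (h2 x))
  rw [← EReal.coe_add]
  congr 1
  ring

/-- Along bounded selections an L-bounded integrand has integrable negative part. -/
lemma LBounded.lintegral_neg_ne_top {mΩ : MeasurableSpace Ω} {μ : Measure Ω} {h : E → Ω → EReal}
    (H : LBounded μ h) {x : Ω → E} {k : ℝ} (hx : ∀ ω, ‖x ω‖ ≤ k) :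
    ∫⁻ ω, ePos (-(h (x ω) ω)) ∂μ ≠ ⊤ := by
  obtain ⟨ρ, m, hρ, hm, hρ0, hm0, hle⟩ := H
  refine ne_top_of_le_ne_top (((hρ.mul_const k).add hm).lintegral_lt_top).ne ?_
  refine lintegral_mono_ae ?_
  filter_upwards [hle] with ω hω
  have h1 : -(h (x ω) ω) ≤ ((ρ ω * ‖x ω‖ + m ω : ℝ) : EReal) := by
    have := hω (x ω)
    rw [EReal.coe_neg] at this
    exact EReal.neg_le.1 this
  refine (EReal.toENNReal_le_toENNReal h1).trans ?_
  refine ENNReal.ofReal_le_ofReal ?_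
  have h2 := mul_le_mul_of_nonneg_left (hx ω) (hρ0 ω)
  change ρ ω * ‖x ω‖ + m ω ≤ ρ ω * k + m ω
  linarith

/-- On each set `{‖x‖ ≤ k}` both summands have integrable negative part, hence satisfy the balance
identity, and these sets cover `Ω`. In this way neither `h₁(x)` nor `h₂(x)` has to be
quasi-integrable over all of `Ω`. -/
lemma IsCondNI.add [BorelSpace E] {G mΩ : MeasurableSpace Ω} {μ : Measure Ω} (hG : G ≤ mΩ)
    {h₁ h₂ k₁ k₂ : E → Ω → EReal} (N₁ : IsNormalIntegrand mΩ h₁) (N₂ : IsNormalIntegrand mΩ h₂)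
    (L₁ : LBounded μ h₁) (L₂ : LBounded μ h₂) (H₁ : IsCondNI μ G h₁ k₁)
    (H₂ : IsCondNI μ G h₂ k₂) :
    IsCondNI μ G (fun x ω => h₁ x ω + h₂ x ω) (fun x ω => k₁ x ω + k₂ x ω) := by
  classical
  refine ⟨H₁.1.add H₂.1, fun x hx hq => ?_⟩
  refine Balanced.isCondExpER hG ?_ ((H₁.1.add H₂.1).measurable_comp hx) hq
  have hA : ∀ k : ℕ, MeasurableSet[G] {ω | ‖x ω‖ ≤ k} := fun k =>
    (measurable_norm.comp hx) measurableSet_Iic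
  have hxk : ∀ k : ℕ, Measurable[G] ({ω | ‖x ω‖ ≤ k}.indicator x) := fun k => hx.indicator (hA k)
  have hbd : ∀ k : ℕ, ∀ ω, ‖{ω | ‖x ω‖ ≤ k}.indicator x ω‖ ≤ k := by
    intro k ω
    by_cases hω : ‖x ω‖ ≤ k
    · rw [Set.indicator_of_mem (by exact hω)]; exact hω
    · rw [Set.indicator_of_notMem (by exact hω), norm_zero]; positivity
  refine Balanced.of_cover hG hA ?_ ?_
    (ζ := fun k ω => h₁ ({ω | ‖x ω‖ ≤ (k : ℝ)}.indicator x ω) ω +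
      h₂ ({ω | ‖x ω‖ ≤ (k : ℝ)}.indicator x ω) ω)
    (ζ' := fun k ω => k₁ ({ω | ‖x ω‖ ≤ (k : ℝ)}.indicator x ω) ω +
      k₂ ({ω | ‖x ω‖ ≤ (k : ℝ)}.indicator x ω) ω) ?_ ?_ ?_
  · intro k l hkl ω hω
    exact le_trans (show ‖x ω‖ ≤ k from hω) (by exact_mod_cast hkl)
  · refine Set.eq_univ_of_forall fun ω => ?_
    obtain ⟨k, hk⟩ := exists_nat_ge ‖x ω‖
    exact Set.mem_iUnion.2 ⟨k, hk⟩
  · intro k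
    have q₁ := L₁.lintegral_neg_ne_top (hbd k)
    have q₂ := L₂.lintegral_neg_ne_top (hbd k)
    have c₁ := (H₁.2 _ (hxk k) (Or.inr q₁)).balanced hG q₁
    have c₂ := (H₂.2 _ (hxk k) (Or.inr q₂)).balanced hG q₂
    exact c₁.add hG c₂ (N₁.measurable_comp ((hxk k).mono hG le_rfl))
      (N₂.measurable_comp ((hxk k).mono hG le_rfl)) (H₁.1.measurable_comp (hxk k))
      (H₂.1.measurable_comp (hxk k)) (fun ω => N₁.2.2 _ ω) (fun ω => N₂.2.2 _ ω)
      (fun ω => H₁.1.2.2 _ ω) (fun ω => H₂.1.2.2 _ ω) q₁ q₂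
  · intro k ω hω
    simp only [Set.indicator_of_mem hω]
  · intro k ω hω
    simp only [Set.indicator_of_mem hω]

end

/-! ### Scalar multiples of normal integrands -/

section

variable {Ω : Type*} {E : Type*} [TopologicalSpace E]

lemma coe_mul_ne_bot {c : ℝ} (hc : 0 ≤ c) {a : EReal} (ha : a ≠ ⊥) : (c : EReal) * a ≠ ⊥ := by
  induction a with
  | bot => exact absurd rfl ha
  | top =>
    rcases hc.eq_or_lt with rfl | hc
    · simp
    · rw [EReal.coe_mul_top_of_pos hc]; simp
  | coe a => rw [← EReal.coe_mul]; exact EReal.coe_ne_bot _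

lemma domClInd_ne_bot (h : E → Ω → EReal) (x : E) (ω : Ω) : domClInd h x ω ≠ ⊥ := by
  unfold domClInd
  split_ifs <;> simp

lemma domClInd_nonneg (h : E → Ω → EReal) (x : E) (ω : Ω) : 0 ≤ domClInd h x ω := by
  unfold domClInd
  split_ifs <;> simp

lemma eq_top_of_notMem {h : E → Ω → EReal} {x : E} {ω : Ω}
    (hx : x ∉ closure {y : E | h y ω < ⊤}) : h x ω = ⊤ := by
  by_contra hne
  exact hx (subset_closure (lt_top_iff_ne_top.2 hne))

lemma lowerSemicontinuous_coe_mul {c : ℝ} (hc : 0 ≤ c) {f : E → EReal}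
    (hf : LowerSemicontinuous f) : LowerSemicontinuous fun x => (c : EReal) * f x := by
  rcases hc.eq_or_lt with rfl | hc
  · simpa using lowerSemicontinuous_const
  have hcont : Continuous fun y : EReal => (c : EReal) * y := by
    refine continuous_iff_continuousAt.2 fun y => ?_
    have hc' : (c : EReal) ≠ 0 := by exact_mod_cast hc.ne'
    have h1 : ContinuousAt (fun p : EReal × EReal => p.1 * p.2) ((c : EReal), y) :=
      EReal.continuousAt_mul (Or.inl hc') (Or.inl hc') (Or.inl (EReal.coe_ne_bot c))
        (Or.inl (EReal.coe_ne_top c))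
    exact h1.comp (f := fun y : EReal => ((c : EReal), y)) (by fun_prop)
  exact hcont.comp_lowerSemicontinuous hf
    fun a b hab => mul_le_mul_of_nonneg_left hab (by exact_mod_cast hc.le)

lemma lowerSemicontinuous_domClInd (h : E → Ω → EReal) (ω : Ω) :
    LowerSemicontinuous fun x => domClInd h x ω := by
  intro x y hy
  change y < domClInd h x ω at hy
  change ∀ᶠ x' in nhds x, y < domClInd h x' ω
  by_cases hx : x ∈ closure {y : E | h y ω < ⊤}
  · have h0 : domClInd h x ω = 0 := by simp [domClInd, hx]
    rw [h0] at hy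
    exact Filter.Eventually.of_forall fun x' => hy.trans_le (domClInd_nonneg h x' ω)
  · filter_upwards [isClosed_closure.isOpen_compl.mem_nhds hx] with x' hx'
    have h1 : domClInd h x' ω = ⊤ := by
      have : x' ∉ closure {y : E | h y ω < ⊤} := hx'
      simp [domClInd, this]
    rw [h1]
    exact lt_of_lt_of_le hy le_top

lemma ePos_mul_add_domClInd {c : ℝ} (hc : 0 ≤ c) (h : E → Ω → EReal) (x : E) (ω : Ω) :
    ePos ((c : EReal) * h x ω + domClInd h x ω) =
      ENNReal.ofReal c * ePos (h x ω) + ePos (domClInd h x ω) := by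
  by_cases hx : x ∈ closure {y : E | h y ω < ⊤}
  · have h0 : domClInd h x ω = 0 := by simp [domClInd, hx]
    rw [h0, add_zero, ePos_mul hc, ePos_of_nonpos le_rfl, add_zero]
  · have h0 : domClInd h x ω = ⊤ := by simp [domClInd, hx]
    rw [h0, EReal.add_top_of_ne_bot (coe_mul_ne_bot hc (by simp [eq_top_of_notMem hx]))]
    simp [ePos_eq]

lemma ePos_neg_mul_add_domClInd {c : ℝ} (hc : 0 ≤ c) (h : E → Ω → EReal) (x : E) (ω : Ω) :
    ePos (-((c : EReal) * h x ω + domClInd h x ω)) = ENNReal.ofReal c * ePos (-(h x ω)) := by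
  by_cases hx : x ∈ closure {y : E | h y ω < ⊤}
  · have h0 : domClInd h x ω = 0 := by simp [domClInd, hx]
    rw [h0, add_zero, ePos_neg_mul hc]
  · have h0 : domClInd h x ω = ⊤ := by simp [domClInd, hx]
    rw [h0, EReal.add_top_of_ne_bot (coe_mul_ne_bot hc (by simp [eq_top_of_notMem hx])),
      eq_top_of_notMem hx]
    simp [ePos_eq]

/-- Outside a null set `N ∈ m` the indicator of the closed domain agrees with a jointly measurable
function. If the nonnegative multiplier `β` equals `1` on `N`, then `β h + δ_{cl dom h}` is a
normal integrand, since it reduces to `h` over `N`. -/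
lemma exists_null_isNormalIntegrand [PolishSpace E] [MeasurableSpace E] [BorelSpace E]
    (m : MeasurableSpace Ω) (ν : Measure Ω) [IsFiniteMeasure ν] {h : E → Ω → EReal}
    (H : IsNormalIntegrand m h) :
    ∃ N : Set Ω, MeasurableSet N ∧ ν N = 0 ∧ ∀ β : Ω → ℝ, Measurable β → (∀ ω, 0 ≤ β ω) →
      (∀ ω ∈ N, β ω = 1) →
      IsNormalIntegrand m fun x ω => (β ω : EReal) * h x ω + domClInd h x ω := by
  classical
  obtain ⟨N, hN, hN0, D, hD, hDN⟩ := exists_measurable_closure m ν {p : E × Ω | h p.1 p.2 < ⊤}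
    (H.1 measurableSet_Iio)
  refine ⟨N, hN, hN0, fun β hβ hβ0 hβN => ⟨?_, fun ω => ?_, fun x ω => ?_⟩⟩
  · have hM : Measurable fun p : E × Ω =>
        if p.2 ∈ N then h p.1 p.2
        else (β p.2 : EReal) * h p.1 p.2 + (if p ∈ D then 0 else ⊤) := by
      refine Measurable.ite (measurable_snd hN) H.1 ?_
      refine Measurable.add (Measurable.mul ?_ H.1)
        (Measurable.ite hD measurable_const measurable_const)
      exact measurable_coe_real_ereal.comp (hβ.comp measurable_snd)
    refine (congrArg Measurable (funext fun p => ?_)).mpr hM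
    obtain ⟨x, ω⟩ := p
    by_cases hω : ω ∈ N
    · simp only [hω, if_true, hβN ω hω, EReal.coe_one, one_mul]
      by_cases hx : x ∈ closure {y : E | h y ω < ⊤}
      · simp [domClInd, hx]
      · simp [domClInd, hx, eq_top_of_notMem hx]
    · have := hDN x ω hω
      simp only [Set.mem_ofPred_eq] at this
      simp only [hω, if_false, domClInd, this]
  · exact LowerSemicontinuous.ereal_add (lowerSemicontinuous_coe_mul (hβ0 ω) (H.2.1 ω))
      (lowerSemicontinuous_domClInd h ω) (fun x => coe_mul_ne_bot (hβ0 ω) (H.2.2 x ω))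
      (fun x => domClInd_ne_bot h x ω)
  · exact add_ne_bot' (coe_mul_ne_bot (hβ0 ω) (H.2.2 x ω)) (domClInd_ne_bot h x ω)

/-- A nonnegative integrable function may be replaced by its conditional expectation when it is
integrated against a `G`-measurable function with values in `[0,∞]`. -/
lemma lintegral_ofReal_condExp_mul {G mΩ : MeasurableSpace Ω} {μ : Measure Ω} [IsFiniteMeasure μ]
    (hG : G ≤ mΩ) {α β : Ω → ℝ} (hα : Integrable α μ) (hα0 : ∀ ω, 0 ≤ α ω)
    (hβ0 : ∀ ω, 0 ≤ β ω) (hβ : β =ᵐ[μ] μ[α|G]) {f : Ω → ℝ≥0∞} (hf : Measurable[G] f) :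
    ∫⁻ ω, ENNReal.ofReal (α ω) * f ω ∂μ = ∫⁻ ω, ENNReal.ofReal (β ω) * f ω ∂μ := by
  have hβi : Integrable β μ := integrable_condExp.congr hβ.symm
  have key : ∀ {a : Ω → ℝ}, Integrable a μ → ∫⁻ ω, ENNReal.ofReal (a ω) * f ω ∂μ =
      ∫⁻ ω, f ω ∂((μ.withDensity fun ω => ENNReal.ofReal (a ω)).trim hG) := by
    intro a ha
    rw [lintegral_trim hG hf, lintegral_withDensity_eq_lintegral_mul₀
      ha.aestronglyMeasurable.aemeasurable.ennreal_ofReal (hf.mono hG le_rfl).aemeasurable]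
    rfl
  rw [key hα, key hβi]
  congr 1
  refine @Measure.ext _ G _ _ fun s hs => ?_
  rw [trim_measurableSet_eq hG hs, trim_measurableSet_eq hG hs, withDensity_apply _ (hG _ hs),
    withDensity_apply _ (hG _ hs),
    ← ofReal_integral_eq_lintegral_ofReal hα.integrableOn (Filter.Eventually.of_forall hα0),
    ← ofReal_integral_eq_lintegral_ofReal hβi.integrableOn (Filter.Eventually.of_forall hβ0),
    ← setIntegral_condExp hG hα hs]
  congr 1
  exact integral_congr_ae (ae_restrict_of_ae hβ.symm)

/-- The terms `δ_{cl dom h}` cancel in the balance identity; what is left is `E[α g] = E[β g]` for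
the `G`-measurable functions `g = γ h(x)⁺` and `g = γ h(x)⁻`. -/
lemma balanced_mul [MeasurableSpace E] {G mΩ : MeasurableSpace Ω} {μ : Measure Ω}
    [IsFiniteMeasure μ] (hG : G ≤ mΩ) {α β : Ω → ℝ} (hα : Integrable α μ) (hα0 : ∀ ω, 0 ≤ α ω)
    (hβm : Measurable[G] β) (hβ0 : ∀ ω, 0 ≤ β ω) (hβ : β =ᵐ[μ] μ[α|G]) {h : E → Ω → EReal}
    (H : IsNormalIntegrand G h) {x : Ω → E} (hx : Measurable[G] x) :
    Balanced μ G (fun ω => (α ω : EReal) * h (x ω) ω + domClInd h (x ω) ω)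
      (fun ω => (β ω : EReal) * h (x ω) ω + domClInd h (x ω) ω) := by
  intro γ hγ hγ0 hγC
  have hξ : Measurable[G] fun ω => h (x ω) ω := H.1.comp (hx.prodMk measurable_id)
  have hp : Measurable[G] fun ω => ENNReal.ofReal (γ ω) * ePos (h (x ω) ω) :=
    hγ.ennreal_ofReal.mul (measurable_ePos.comp hξ)
  have hn : Measurable[G] fun ω => ENNReal.ofReal (γ ω) * ePos (-(h (x ω) ω)) :=
    hγ.ennreal_ofReal.mul (measurable_ePos_neg.comp hξ)
  have hαm : AEMeasurable (fun ω => ENNReal.ofReal (α ω)) μ :=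
    hα.aestronglyMeasurable.aemeasurable.ennreal_ofReal
  have hβm' : Measurable fun ω => ENNReal.ofReal (β ω) := (hβm.mono hG le_rfl).ennreal_ofReal
  have ep := lintegral_ofReal_condExp_mul hG hα hα0 hβ0 hβ hp
  have en := lintegral_ofReal_condExp_mul hG hα hα0 hβ0 hβ hn
  have hp' := hp.mono hG le_rfl
  have hn' := hn.mono hG le_rfl
  -- Each side is the integral of `γ δ` plus two integrals that `ep` and `en` exchange.
  have split : ∀ {a b : Ω → ℝ} (f g : Ω → ℝ≥0∞),
      AEMeasurable (fun ω => ENNReal.ofReal (a ω)) μ →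
      AEMeasurable (fun ω => ENNReal.ofReal (b ω)) μ →
      AEMeasurable (fun ω => ENNReal.ofReal (γ ω) * f ω) μ →
      AEMeasurable (fun ω => ENNReal.ofReal (γ ω) * g ω) μ →
      ∫⁻ ω, ENNReal.ofReal (γ ω) * (ENNReal.ofReal (a ω) * f ω + ePos (domClInd h (x ω) ω) +
        ENNReal.ofReal (b ω) * g ω) ∂μ =
      ∫⁻ ω, ENNReal.ofReal (γ ω) * ePos (domClInd h (x ω) ω) ∂μ +
        (∫⁻ ω, ENNReal.ofReal (a ω) * (ENNReal.ofReal (γ ω) * f ω) ∂μ +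
        ∫⁻ ω, ENNReal.ofReal (b ω) * (ENNReal.ofReal (γ ω) * g ω) ∂μ) := by
    intro a b f g ha hb hf hg
    have haf : AEMeasurable (fun ω => ENNReal.ofReal (a ω) * (ENNReal.ofReal (γ ω) * f ω)) μ :=
      ha.mul hf
    have hbg : AEMeasurable (fun ω => ENNReal.ofReal (b ω) * (ENNReal.ofReal (γ ω) * g ω)) μ :=
      hb.mul hg
    have hs : AEMeasurable (fun ω => ENNReal.ofReal (a ω) * (ENNReal.ofReal (γ ω) * f ω) +
      ENNReal.ofReal (b ω) * (ENNReal.ofReal (γ ω) * g ω)) μ := haf.add hbg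
    rw [← lintegral_add_left' haf, ← lintegral_add_right' _ hs]
    exact lintegral_congr fun ω => by ring
  simp only [ePos_mul_add_domClInd (hα0 _), ePos_mul_add_domClInd (hβ0 _),
    ePos_neg_mul_add_domClInd (hα0 _), ePos_neg_mul_add_domClInd (hβ0 _)]
  rw [split (fun ω => ePos (h (x ω) ω)) (fun ω => ePos (-(h (x ω) ω))) hαm hβm'.aemeasurable
      hp'.aemeasurable hn'.aemeasurable,
    split (fun ω => ePos (h (x ω) ω)) (fun ω => ePos (-(h (x ω) ω))) hβm'.aemeasurable hαm
      hp'.aemeasurable hn'.aemeasurable, ep, en]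

/-- The version `β` of `E^G α` takes the value `1` on the null set where joint measurability of
`δ_{cl dom h}` may fail, because `β h + δ_{cl dom h} = h` there. -/
lemma exists_isCondNI_mul [PolishSpace E] [MeasurableSpace E] [BorelSpace E]
    {G mΩ : MeasurableSpace Ω} {μ : Measure Ω} [IsFiniteMeasure μ] (hG : G ≤ mΩ) {α : Ω → ℝ}
    (hα : Integrable α μ) (hα0 : ∀ ω, 0 ≤ α ω) {h : E → Ω → EReal} (H : IsNormalIntegrand G h) :
    ∃ β : Ω → ℝ, Measurable[G] β ∧ (∀ ω, 0 ≤ β ω) ∧ β =ᵐ[μ] μ[α|G] ∧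
      IsCondNI μ G (fun x ω => (α ω : EReal) * h x ω + domClInd h x ω)
        (fun x ω => (β ω : EReal) * h x ω + domClInd h x ω) := by
  classical
  have := isFiniteMeasure_trim (μ := μ) hG
  obtain ⟨N, hN, hN0, hNI⟩ := exists_null_isNormalIntegrand G (μ.trim hG) H
  rw [trim_measurableSet_eq hG hN] at hN0
  set β : Ω → ℝ := fun ω => if ω ∈ N then 1 else max 0 (μ[α|G] ω) with hβdef
  have hβm : Measurable[G] β :=
    Measurable.ite hN measurable_const (measurable_const.max stronglyMeasurable_condExp.measurable)
  have hβ0 : ∀ ω, 0 ≤ β ω := by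
    intro ω
    simp only [hβdef]
    split_ifs
    · exact zero_le_one
    · exact le_max_left _ _
  have hβ : β =ᵐ[μ] μ[α|G] := by
    have hc : 0 ≤ᵐ[μ] μ[α|G] := condExp_nonneg (Filter.Eventually.of_forall hα0)
    filter_upwards [hc, measure_eq_zero_iff_ae_notMem.1 hN0] with ω h1 h2
    simp only [hβdef, h2, if_false]
    exact max_eq_right h1
  have hnorm := hNI β hβm hβ0 fun ω hω => by simp [hβdef, hω]
  refine ⟨β, hβm, hβ0, hβ, hnorm, fun x hx hq => ?_⟩
  exact (balanced_mul hG hα hα0 hβm hβ0 hβ H hx).isCondExpER hG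
    (hnorm.1.comp (hx.prodMk measurable_id)) hq

end

/-- parts 1 and 2 of Theorem 2.11: conditional expectations of sums of
L-bounded normal integrands, and of a `G`-measurable normal integrand multiplied by a
nonnegative integrable scalar. -/
theorem statement7 {Ω : Type*} {mΩ : MeasurableSpace Ω} (μ : Measure Ω)
    [IsProbabilityMeasure μ] (hcompl : μ.IsComplete)
    (G : MeasurableSpace Ω) (hG : G ≤ mΩ) (n : ℕ)
    (h₁ h₂ : EuclideanSpace ℝ (Fin n) → Ω → EReal)
    (hNI₁ : IsNormalIntegrand mΩ h₁) (hNI₂ : IsNormalIntegrand mΩ h₂)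
    (hLB₁ : LBounded μ h₁) (hLB₂ : LBounded μ h₂)
    (hhat₁ hhat₂ : EuclideanSpace ℝ (Fin n) → Ω → EReal)
    (hce₁ : IsCondNI μ G h₁ hhat₁) (hce₂ : IsCondNI μ G h₂ hhat₂)
    (α : Ω → ℝ) (hα : Integrable α μ) (hα0 : ∀ ω, 0 ≤ α ω)
    (h : EuclideanSpace ℝ (Fin n) → Ω → EReal)
    (hNIG : IsNormalIntegrand G h)
    (hαh : LBounded μ (fun x ω => (α ω : EReal) * h x ω + domClInd h x ω)) :
    (IsNormalIntegrand mΩ (fun x ω => h₁ x ω + h₂ x ω) ∧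
      LBounded μ (fun x ω => h₁ x ω + h₂ x ω) ∧
      IsCondNI μ G (fun x ω => h₁ x ω + h₂ x ω)
        (fun x ω => hhat₁ x ω + hhat₂ x ω)) ∧
    (∃ β : Ω → ℝ, Measurable[G] β ∧ (∀ ω, 0 ≤ β ω) ∧ β =ᵐ[μ] μ[α|G] ∧
      IsCondNI μ G (fun x ω => (α ω : EReal) * h x ω + domClInd h x ω)
        (fun x ω => (β ω : EReal) * h x ω + domClInd h x ω)) := by
  exact
    ⟨⟨hNI₁.add hNI₂, hLB₁.add hLB₂, hce₁.add hG hNI₁ hNI₂ hLB₁ hLB₂ hce₂⟩,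
      exists_isCondNI_mul hG hα hα0 hNIG⟩

end PaperDP
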